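/- For every ε > 0 there exists N such that for all n ≥ N, every simple graph G on n vertices that contains no cycle of length 5 as a subgraph has at most (1/(2√2) + ε)·n^{3/2} triangles. -/

import Mathlib

/-- A graph is `C5`-free if it contains no cycle of length 5 as a subgraph. -/
def C5Free {V : Type*} (G : SimpleGraph V) : Prop :=
  ∀ (v : V) (w : G.Walk v v), w.IsCycle → w.length ≠ 5

def NoC4 {V : Type*} (H : SimpleGraph V) : Prop :=
  ∀ a b c d, H.Adj a b → H.Adj b c → H.Adj c d → H.Adj d a → a ≠ c → b ≠ d → False
def NoC5 {V : Type*} (H : SimpleGraph V) : Prop :=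
  ∀ a b c d e, H.Adj a b → H.Adj b c → H.Adj c d → H.Adj d e → H.Adj e a →
    a ≠ c → a ≠ d → b ≠ d → b ≠ e → c ≠ e → False

section
open Finset
set_option linter.unusedSectionVars false
open scoped Classical in
/-- Adjacency indicator. -/
noncomputable def adjInd {V : Type*} (H : SimpleGraph V) (x y : V) : ℝ :=
  if H.Adj x y then 1 else 0

noncomputable def dg {V : Type*} [Fintype V] (H : SimpleGraph V) (x : V) : ℝ :=
  ∑ y, adjInd H x y

noncomputable def cod {V : Type*} [Fintype V] (H : SimpleGraph V) (x u : V) : ℝ :=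
  ∑ z, adjInd H x z * adjInd H z u

variable {V : Type*} [Fintype V] (H : SimpleGraph V)

lemma adjInd_symm (x y : V) : adjInd H x y = adjInd H y x := by
  by_cases h : H.Adj x y
  · simp [adjInd, h, h.symm]
  · have h2 : ¬ H.Adj y x := fun hyx => h hyx.symm
    simp [adjInd, h, h2]

lemma adjInd_nonneg (x y : V) : 0 ≤ adjInd H x y := by
  unfold adjInd; split_ifs <;> norm_num

lemma adjInd_le_one (x y : V) : adjInd H x y ≤ 1 := by
  unfold adjInd; split_ifs <;> norm_num

lemma dg_nonneg (x : V) : 0 ≤ dg H x := Finset.sum_nonneg fun y _ => adjInd_nonneg H x y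

lemma cod_nonneg (x u : V) : 0 ≤ cod H x u :=
  Finset.sum_nonneg fun _ _ => mul_nonneg (adjInd_nonneg H _ _) (adjInd_nonneg H _ _)

lemma cod_self (x : V) : cod H x x = dg H x := by
  unfold cod dg
  refine Finset.sum_congr rfl fun z _ => ?_
  rw [adjInd_symm H z x]
  unfold adjInd; split_ifs <;> norm_num

lemma cod_le_one (h4 : NoC4 H) {x u : V} (hxu : x ≠ u) : cod H x u ≤ 1 := by
  classical
  have h : cod H x u = ((univ.filter fun z => H.Adj x z ∧ H.Adj z u).card : ℝ) := by
    unfold cod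
    rw [Finset.card_filter]
    push_cast
    refine Finset.sum_congr rfl fun z _ => ?_
    unfold adjInd
    by_cases h1 : H.Adj x z <;> by_cases h2 : H.Adj z u <;> simp [h1, h2]
  rw [h]
  have : (univ.filter fun z => H.Adj x z ∧ H.Adj z u).card ≤ 1 := by
    rw [Finset.card_le_one]
    intro a ha b hb
    simp only [mem_filter, mem_univ, true_and] at ha hb
    by_contra hab
    exact h4 x a u b ha.1 ha.2 hb.2.symm hb.1.symm hxu hab
  exact_mod_cast this

lemma cod_zero_or (x u : V) : cod H x u = 0 ∨ ∃ z, H.Adj x z ∧ H.Adj z u := by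
  by_cases h : ∃ z, H.Adj x z ∧ H.Adj z u
  · exact Or.inr h
  · left
    push Not at h
    refine Finset.sum_eq_zero fun z _ => ?_
    unfold adjInd
    by_cases h1 : H.Adj x z
    · simp [h z h1]
    · simp [h1]

lemma sum_cod (x : V) : ∑ u, cod H x u = ∑ z, adjInd H x z * dg H z := by
  unfold cod dg
  rw [Finset.sum_comm]
  simp [Finset.mul_sum]

lemma sum_dg_sq (h4 : NoC4 H) :
    ∑ x, dg H x ^ 2 ≤ (Fintype.card V : ℝ) ^ 2 + ∑ x, dg H x := by
  classical
  have h1 : ∑ x, dg H x ^ 2 = ∑ y, ∑ z, cod H y z := by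
    calc ∑ x, dg H x ^ 2 = ∑ x, ∑ y, ∑ z, adjInd H y x * adjInd H x z := by
          refine Finset.sum_congr rfl fun x _ => ?_
          rw [sq, dg, Finset.sum_mul_sum]
          simp [adjInd_symm H x]
      _ = ∑ y, ∑ x, ∑ z, adjInd H y x * adjInd H x z := Finset.sum_comm
      _ = ∑ y, ∑ z, cod H y z := by
          refine Finset.sum_congr rfl fun y _ => ?_
          rw [Finset.sum_comm]; rfl
  rw [h1]
  have h2 : ∀ y z, cod H y z ≤ 1 + if y = z then dg H y else 0 := by
    intro y z
    by_cases h : y = z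
    · subst h; simp [cod_self]
    · simp [h, cod_le_one H h4 h]
  calc ∑ y, ∑ z, cod H y z ≤ ∑ y, ∑ z, (1 + if y = z then dg H y else 0) :=
        Finset.sum_le_sum fun y _ => Finset.sum_le_sum fun z _ => h2 y z
    _ = _ := by
        simp [Finset.sum_add_distrib, sq]

open scoped Classical in
lemma pointwise (h4 : NoC4 H) (h5 : NoC5 H) (x y u : V) :
    adjInd H x y * (cod H x u + cod H y u) ≤
      adjInd H x y * (1 + (if x = u then dg H x else 0) + (if y = u then dg H y else 0)
        + adjInd H x u + adjInd H y u + ∑ c, adjInd H x c * adjInd H y c * adjInd H c u) := by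
  by_cases hxy : H.Adj x y
  swap
  · simp [adjInd, hxy]
  refine mul_le_mul_of_nonneg_left ?_ (adjInd_nonneg H x y)
  have hs : ∀ c, 0 ≤ adjInd H x c * adjInd H y c * adjInd H c u := fun c =>
    mul_nonneg (mul_nonneg (adjInd_nonneg H _ _) (adjInd_nonneg H _ _)) (adjInd_nonneg H _ _)
  have hS : 0 ≤ ∑ c, adjInd H x c * adjInd H y c * adjInd H c u :=
    Finset.sum_nonneg fun c _ => hs c
  have hA := adjInd_nonneg H x u
  have hB := adjInd_nonneg H y u
  by_cases hxu : x = u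
  · subst hxu
    have := cod_le_one H h4 hxy.ne.symm
    rw [cod_self]
    simp only [hxy.ne.symm, if_true, if_false]
    linarith
  by_cases hyu : y = u
  · subst hyu
    have := cod_le_one H h4 hxy.ne
    rw [cod_self]
    simp only [hxy.ne, if_true, if_false]
    linarith
  simp only [hxu, hyu, if_false]
  have c1 := cod_le_one H h4 hxu
  have c2 := cod_le_one H h4 hyu
  by_cases axu : H.Adj x u
  · have : adjInd H x u = 1 := by simp [adjInd, axu]
    linarith
  by_cases ayu : H.Adj y u
  · have : adjInd H y u = 1 := by simp [adjInd, ayu]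
    linarith
  rcases cod_zero_or H x u with h | ⟨z, hz1, hz2⟩
  · linarith
  rcases cod_zero_or H y u with h | ⟨w, hw1, hw2⟩
  · linarith
  have hzw : z = w := by
    by_contra hzw
    refine h5 x z u w y hz1 hz2 hw2.symm hw1.symm hxy.symm hxu ?_ hzw ?_ (Ne.symm hyu)
    · rintro rfl; exact axu hw2
    · rintro rfl; exact ayu hz2
  subst hzw
  have := Finset.single_le_sum (fun c _ => hs c) (Finset.mem_univ z)
  have e : adjInd H x z * adjInd H y z * adjInd H z u = 1 := by simp [adjInd, hz1, hw1, hz2]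
  linarith

lemma walk_upper (h4 : NoC4 H) (h5 : NoC5 H) :
    2 * ∑ x, ∑ y, adjInd H x y * (dg H x * dg H y) ≤
      (Fintype.card V : ℝ) * ∑ x, dg H x + 5 * ∑ x, dg H x ^ 2 := by
  classical
  have hsum := Finset.sum_le_sum fun x (_ : x ∈ univ) => Finset.sum_le_sum fun y (_ : y ∈ univ) =>
    Finset.sum_le_sum fun u (_ : u ∈ univ) => pointwise H h4 h5 x y u
  have L1 : ∑ x, ∑ y, ∑ u, adjInd H x y * cod H x u
      = ∑ x, ∑ y, adjInd H x y * (dg H x * dg H y) := by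
    refine Finset.sum_congr rfl fun x _ => ?_
    simp_rw [← Finset.mul_sum, sum_cod, ← Finset.sum_mul]
    change dg H x * _ = _
    rw [Finset.mul_sum]
    refine Finset.sum_congr rfl fun y _ => ?_
    ring
  have L2 : ∑ x, ∑ y, ∑ u, adjInd H x y * cod H y u
      = ∑ x, ∑ y, adjInd H x y * (dg H x * dg H y) := by
    rw [Finset.sum_comm, ← L1]
    refine Finset.sum_congr rfl fun x _ => Finset.sum_congr rfl fun y _ => ?_
    rw [adjInd_symm]
  have R1 : ∑ x, ∑ y, ∑ _u : V, adjInd H x y = (Fintype.card V : ℝ) * ∑ x, dg H x := by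
    simp [dg, Finset.mul_sum]
  have R2 : ∑ x, ∑ y, ∑ u, adjInd H x y * (if x = u then dg H x else 0) = ∑ x, dg H x ^ 2 := by
    simp [← Finset.sum_mul]
    simp [dg, sq]
  have R3 : ∑ x, ∑ y, ∑ u, adjInd H x y * (if y = u then dg H y else 0) = ∑ x, dg H x ^ 2 := by
    rw [Finset.sum_comm, ← R2]
    refine Finset.sum_congr rfl fun x _ => Finset.sum_congr rfl fun y _ => ?_
    rw [adjInd_symm]
  have R4 : ∑ x, ∑ y, ∑ u, adjInd H x y * adjInd H x u = ∑ x, dg H x ^ 2 := by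
    refine Finset.sum_congr rfl fun x _ => ?_
    rw [sq, dg, Finset.sum_mul_sum]
  have R5 : ∑ x, ∑ y, ∑ u, adjInd H x y * adjInd H y u = ∑ x, dg H x ^ 2 := by
    rw [Finset.sum_comm, ← R4]
    refine Finset.sum_congr rfl fun x _ => Finset.sum_congr rfl fun y _ => ?_
    rw [adjInd_symm]
  have R6 : ∑ x, ∑ y, ∑ u, adjInd H x y * (∑ c, adjInd H x c * adjInd H y c * adjInd H c u)
      ≤ ∑ x, dg H x ^ 2 := by
    have e : ∀ x, ∑ y, ∑ u, adjInd H x y * (∑ c, adjInd H x c * adjInd H y c * adjInd H c u)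
        = ∑ c, adjInd H x c * cod H x c * dg H c := by
      intro x
      have e1 : ∀ y, ∑ u, adjInd H x y * (∑ c, adjInd H x c * adjInd H y c * adjInd H c u)
        = ∑ c, adjInd H x c * (adjInd H x y * adjInd H y c) * dg H c := by
        intro y
        rw [← Finset.mul_sum, Finset.sum_comm, Finset.mul_sum]
        refine Finset.sum_congr rfl fun c _ => ?_
        rw [← Finset.mul_sum, dg]
        ring
      simp_rw [e1]
      rw [Finset.sum_comm]
      refine Finset.sum_congr rfl fun c _ => ?_
      rw [cod, Finset.mul_sum, Finset.sum_mul]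
    simp_rw [e]
    rw [Finset.sum_comm]
    refine Finset.sum_le_sum fun c _ => ?_
    rw [sq, ← Finset.sum_mul]
    refine mul_le_mul_of_nonneg_right ?_ (dg_nonneg H c)
    refine Finset.sum_le_sum fun x _ => ?_
    rw [adjInd_symm H x c]
    by_cases hcx : H.Adj c x
    · have := cod_le_one H h4 hcx.ne.symm
      simpa [adjInd, hcx] using this
    · simp [adjInd, hcx]
  simp only [mul_add, Finset.sum_add_distrib, mul_one] at hsum
  linarith

lemma key_real {a b D : ℝ} (ha : 0 < a) (hb : 0 < b) (hD : 0 ≤ D) :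
    3 * D ^ 2 - D ^ 3 * (a⁻¹ + b⁻¹) ≤ a * b := by
  obtain ⟨s, hs, rfl⟩ : ∃ s, 0 < s ∧ s ^ 2 = a := ⟨√a, by positivity, Real.sq_sqrt ha.le⟩
  obtain ⟨t, ht, rfl⟩ : ∃ s, 0 < s ∧ s ^ 2 = b := ⟨√b, by positivity, Real.sq_sqrt hb.le⟩
  have h1 : 2 * (s * t)⁻¹ ≤ (s ^ 2)⁻¹ + (t ^ 2)⁻¹ := by
    have := two_mul_le_add_sq s⁻¹ t⁻¹
    rw [mul_inv, ← inv_pow, ← inv_pow]; linarith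
  have hp : 0 < s * t := by positivity
  set p := s * t
  have h2 : 3 * D ^ 2 - D ^ 3 * (2 * p⁻¹) ≤ p ^ 2 := by
    have : 0 ≤ (p - D) ^ 2 * (p + 2 * D) * p⁻¹ := by positivity
    have e : (p - D) ^ 2 * (p + 2 * D) * p⁻¹ = p ^ 2 - (3 * D ^ 2 - D ^ 3 * (2 * p⁻¹)) := by
      field_simp; ring
    linarith
  have h3 := mul_le_mul_of_nonneg_left h1 (pow_nonneg hD 3)
  have : p ^ 2 = s ^ 2 * t ^ 2 := by simp only [p]; ring
  linarith

lemma walk_lower {D : ℝ} (hD : 0 ≤ D) :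
    3 * D ^ 2 * ∑ x, dg H x - 2 * D ^ 3 * Fintype.card V ≤
      ∑ x, ∑ y, adjInd H x y * (dg H x * dg H y) := by
  have pw : ∀ x y, adjInd H x y * (3 * D ^ 2) - D ^ 3 * (adjInd H x y * (dg H x)⁻¹)
      - D ^ 3 * (adjInd H x y * (dg H y)⁻¹) ≤ adjInd H x y * (dg H x * dg H y) := by
    intro x y
    by_cases h : H.Adj x y
    · have e : adjInd H x y = 1 := by simp [adjInd, h]
      have hx : adjInd H x y ≤ dg H x :=
        Finset.single_le_sum (fun c _ => adjInd_nonneg H x c) (Finset.mem_univ y)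
      have hy : adjInd H y x ≤ dg H y :=
        Finset.single_le_sum (fun c _ => adjInd_nonneg H y c) (Finset.mem_univ x)
      rw [adjInd_symm, e] at hy
      rw [e] at hx ⊢
      have := key_real (lt_of_lt_of_le one_pos hx) (lt_of_lt_of_le one_pos hy) hD
      linarith
    · simp [adjInd, h]
  have hs := Finset.sum_le_sum fun x (_ : x ∈ univ) => Finset.sum_le_sum fun y (_ : y ∈ univ) =>
    pw x y
  have q1 : ∑ x, ∑ y, adjInd H x y * (dg H x)⁻¹ ≤ Fintype.card V := by
    calc _ ≤ ∑ _x : V, (1 : ℝ) := by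
          refine Finset.sum_le_sum fun x _ => ?_
          rw [← Finset.sum_mul]
          exact mul_inv_le_one
      _ = _ := by simp
  have q2 : ∑ x, ∑ y, adjInd H x y * (dg H y)⁻¹ ≤ Fintype.card V := by
    rw [Finset.sum_comm]
    refine le_trans (le_of_eq ?_) q1
    refine Finset.sum_congr rfl fun x _ => Finset.sum_congr rfl fun y _ => ?_
    rw [adjInd_symm]
  have q3 : ∑ x, ∑ y, adjInd H x y * (3 * D ^ 2) = 3 * D ^ 2 * ∑ x, dg H x := by
    simp_rw [← Finset.sum_mul]
    rw [mul_comm]; rfl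
  simp only [Finset.sum_sub_distrib, ← Finset.mul_sum] at hs
  have h3 := pow_nonneg hD 3
  have w1 := mul_le_mul_of_nonneg_left q1 h3
  have w2 := mul_le_mul_of_nonneg_left q2 h3
  linarith

lemma edge_ineq (h4 : NoC4 H) (h5 : NoC5 H) {n M : ℝ} (hn : n = Fintype.card V) (hn0 : 0 < n)
    (hM : ∑ x, dg H x = M) :
    2 * M ^ 3 ≤ M * n ^ 3 + 5 * n ^ 4 + 5 * M * n ^ 2 := by
  have hM0 : 0 ≤ M := hM ▸ Finset.sum_nonneg fun x _ => dg_nonneg H x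
  have a := sum_dg_sq H h4
  have b := walk_upper H h4 h5
  have c := walk_lower H (D := M / n) (by positivity)
  rw [← hn, hM] at *
  have e : 3 * (M / n) ^ 2 * M - 2 * (M / n) ^ 3 * n = M ^ 3 / n ^ 2 := by field_simp; ring
  rw [e] at c
  have : 2 * (M ^ 3 / n ^ 2) ≤ n * M + 5 * (n ^ 2 + M) := by linarith
  have := mul_le_mul_of_nonneg_right this (by positivity : 0 ≤ n ^ 2)
  have e2 : 2 * (M ^ 3 / n ^ 2) * n ^ 2 = 2 * M ^ 3 := by field_simp
  rw [e2] at this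
  linarith
end

lemma final_arith {ε s t : ℝ} (hε : 0 < ε) (hs1 : 1 ≤ s) (hs : 4 / ε ≤ s) 
    (h : 2 * (2 * t) ^ 3 ≤ (2 * t) * (s ^ 2) ^ 3 + 5 * (s ^ 2) ^ 4 + 5 * (2 * t) * (s ^ 2) ^ 2) :
    t ≤ (1 / (2 * Real.sqrt 2) + ε) * s ^ 3 := by
  by_contra hc
  push Not at hc
  set a := 1 / (2 * Real.sqrt 2) with ha
  have ha2 : a ^ 2 = 1 / 8 := by rw [ha, div_pow, mul_pow, Real.sq_sqrt] <;> norm_num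
  have ha0 : 0 < a := by positivity
  have ha3 : 1 / 3 < a := by nlinarith
  have hs0 : 0 < s := by linarith
  have hes : 4 ≤ ε * s := by rw [div_le_iff₀ hε] at hs; linarith
  have ht : (1 / 3) * s ^ 3 < t := lt_of_le_of_lt (by gcongr; linarith) hc
  have ht0 : 0 < t := lt_trans (by positivity) ht
  have ht2 : (1 / 8 + ε / 2) * s ^ 6 < t ^ 2 := by
    have : ((a + ε) * s ^ 3) ^ 2 < t ^ 2 := by gcongr
    refine lt_of_le_of_lt ?_ this
    have : ((a + ε) * s ^ 3) ^ 2 = (a + ε) ^ 2 * s ^ 6 := by ring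
    rw [this]
    gcongr
    nlinarith
  have k1 : 5 * (s ^ 2) ^ 4 ≤ t * (15 * s ^ 5) := by
    have := mul_le_mul_of_nonneg_right ht.le (by positivity : 0 ≤ 15 * s ^ 5)
    linarith
  have k2 : t * (16 * t ^ 2) ≤ t * (2 * s ^ 6 + 15 * s ^ 5 + 10 * s ^ 4) := by linarith
  have k3 := le_of_mul_le_mul_left k2 ht0
  have k4 : s ^ 4 ≤ s ^ 5 := pow_le_pow_right₀ hs1 (by norm_num)
  have k5 : 4 * s ^ 5 ≤ ε * s ^ 6 := by
    have := mul_le_mul_of_nonneg_right hes (by positivity : 0 ≤ s ^ 5)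
    linarith
  have : 0 < s ^ 5 := by positivity
  linarith

lemma noC5_of_C5Free {V : Type*} {G : SimpleGraph V} (h : C5Free G) : NoC5 G := by
  intro a b c d e hab hbc hcd hde hea h1 h2 h3 h4 h5
  let w : G.Walk a a := .cons hab (.cons hbc (.cons hcd (.cons hde (.cons hea .nil))))
  refine h a w ?_ rfl
  have n1 := hab.ne
  have n2 := hbc.ne
  have n3 := hcd.ne
  have n4 := hde.ne
  have n5 := hea.ne
  simp only [w, SimpleGraph.Walk.cons_isCycle_iff, SimpleGraph.Walk.cons_isPath_iff,
    SimpleGraph.Walk.IsPath.nil, SimpleGraph.Walk.support_cons, SimpleGraph.Walk.support_nil,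
    SimpleGraph.Walk.edges_cons, SimpleGraph.Walk.edges_nil, List.mem_cons, List.not_mem_nil,
    Sym2.eq_iff]
  grind

lemma heavy {V : Type*} {G : SimpleGraph V} (h5 : NoC5 G) {a b c d u : V}
    (hab : G.Adj a b) (hac : G.Adj a c) (hbc : G.Adj b c)
    (had : G.Adj a d) (hbd : G.Adj b d) (hdc : d ≠ c)
    (hau : G.Adj a u) (hcu : G.Adj c u) (hub : u ≠ b) : u = d := by
  by_contra hud
  exact h5 a u c b d hau hcu.symm hbc.symm hbd had.symm hac.ne hab.ne hub hud hdc.symm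

/-- Order rule picking an edge `uw` of the triangle `uvw` inside the `K4` on `u, v, w, z`. -/
def OrdRule {V : Type*} [LinearOrder V] (u v w z : V) : Prop :=
  (u < w ∧ w < v ∧ ¬ (w < z ∧ z < v)) ∨ (u < v ∧ v < z ∧ z < w)

/-- `e` is an admissible edge for the triangle `T`. -/
def Good {V : Type*} [LinearOrder V] (G : SimpleGraph V) (T : Finset V) (e : Sym2 V) : Prop :=
  ∃ u v w, T = {u, v, w} ∧ e = s(u, w) ∧ G.Adj u v ∧ G.Adj v w ∧ G.Adj u w ∧
    ((∀ z, G.Adj u z → G.Adj w z → z = v) ∨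
      ∃ z, G.Adj u z ∧ G.Adj v z ∧ G.Adj w z ∧ OrdRule u v w z)

section
variable {V : Type*} [LinearOrder V] {G : SimpleGraph V}

lemma good_third {T : Finset V} {x y : V} (h : Good G T s(x, y)) :
    G.Adj x y ∧ ∃ v, T = {x, y, v} ∧ G.Adj x v ∧ G.Adj y v := by
  obtain ⟨u, v, w, hT, he, huv, hvw, huw, -⟩ := h
  rcases Sym2.eq_iff.1 he with ⟨rfl, rfl⟩ | ⟨rfl, rfl⟩
  · refine ⟨huw, v, ?_, huv, hvw.symm⟩
    rw [hT]; ext; simp; tauto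
  · refine ⟨huw.symm, v, ?_, hvw.symm, huv⟩
    rw [hT]; ext; simp; tauto

lemma good_exists_sorted (h5 : NoC5 G) {a b c : V} (h1 : a < b) (h2 : b < c)
    (hab : G.Adj a b) (hac : G.Adj a c) (hbc : G.Adj b c) :
    ∃ e, Good G {a, b, c} e := by
  by_cases A : ∀ z, G.Adj a z → G.Adj b z → z = c
  · exact ⟨s(a, b), a, c, b, by ext; simp; tauto, rfl, hac, hbc.symm, hab, Or.inl A⟩
  by_cases B : ∀ z, G.Adj a z → G.Adj c z → z = b
  · exact ⟨s(a, c), a, b, c, by ext; simp, rfl, hab, hbc, hac, Or.inl B⟩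
  push Not at A B
  obtain ⟨d, had, hbd, hdc⟩ := A
  obtain ⟨u, hau, hcu, hub⟩ := B
  obtain rfl := heavy h5 hab hac hbc had hbd hdc hau hcu hub
  by_cases O : b < u ∧ u < c
  · exact ⟨s(a, c), a, b, c, by ext; simp, rfl, hab, hbc, hac,
      Or.inr ⟨u, had, hbd, hcu, Or.inr ⟨h1, O.1, O.2⟩⟩⟩
  · exact ⟨s(a, b), a, c, b, by ext; simp; tauto, rfl, hac, hbc.symm, hab,
      Or.inr ⟨u, had, hcu, hbd, Or.inl ⟨h1, h2, O⟩⟩⟩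

lemma good_exists (h5 : NoC5 G) {T : Finset V} (hT : G.IsNClique 3 T) : ∃ e, Good G T e := by
  obtain ⟨a, b, c, hab, hac, hbc, rfl⟩ := SimpleGraph.is3Clique_iff.1 hT
  have key : ∀ x y z : V, ({x, y, z} : Finset V) = {a, b, c} → x < y → y < z → G.Adj x y →
      G.Adj x z → G.Adj y z → ∃ e, Good G {a, b, c} e := by
    intro x y z h h1 h2 h3 h4 h6
    rw [← h]
    exact good_exists_sorted h5 h1 h2 h3 h4 h6
  rcases lt_or_gt_of_ne hab.ne with h1 | h1 <;> rcases lt_or_gt_of_ne hac.ne with h2 | h2 <;>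
    rcases lt_or_gt_of_ne hbc.ne with h3 | h3
  · exact key a b c rfl h1 h3 hab hac hbc
  · exact key a c b (by ext; simp; tauto) h2 h3 hac hab hbc.symm
  · exact absurd (h1.trans h3) h2.not_gt
  · exact key c a b (by ext; simp; tauto) h2 h1 hac.symm hbc.symm hab
  · exact key b a c (by ext; simp; tauto) h1 h2 hab.symm hbc hac
  · exact absurd (h1.trans h2) h3.not_gt
  · exact key b c a (by ext; simp; tauto) h3 h2 hbc hab.symm hac.symm
  · exact key c b a (by ext; simp; tauto) h3 h1 hbc.symm hac.symm hab.symm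

lemma OrdRule.lt {u v w z : V} (h : OrdRule u v w z) : u < w := by
  rcases h with h | h
  · exact h.1.trans_le le_rfl
  · exact h.1.trans (h.2.1.trans h.2.2)

lemma OrdRule.anti {u v w z : V} (hvz : v ≠ z) (h : OrdRule u v w z) (k : OrdRule u z w v) :
    False := by
  rcases lt_or_gt_of_ne hvz with h0 | h0 <;> rcases h with ⟨a, b, c⟩ | ⟨a, b, c⟩ <;>
    rcases k with ⟨a1, b1, c1⟩ | ⟨a1, b1, c1⟩ <;> grind

lemma good_inj (h5 : NoC5 G) {T T' : Finset V} {e : Sym2 V} (h : Good G T e) (h' : Good G T' e) :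
    T = T' := by
  obtain ⟨u, v, w, hT, he, huv, hvw, huw, H⟩ := h
  obtain ⟨u', v', w', hT', he', huv', hvw', huw', H'⟩ := h'
  have hs := Sym2.eq_iff.1 (he.symm.trans he')
  by_cases hvv : v = v'
  · rw [hT, hT', hvv]
    rcases hs with ⟨rfl, rfl⟩ | ⟨rfl, rfl⟩
    · rfl
    · ext; simp; tauto
  exfalso
  have a1 : G.Adj u v' ∧ G.Adj w v' := by
    rcases hs with ⟨rfl, rfl⟩ | ⟨rfl, rfl⟩
    · exact ⟨huv', hvw'.symm⟩
    · exact ⟨hvw'.symm, huv'⟩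
  have a2 : G.Adj u' v ∧ G.Adj w' v := by
    rcases hs with ⟨rfl, rfl⟩ | ⟨rfl, rfl⟩
    · exact ⟨huv, hvw.symm⟩
    · exact ⟨hvw.symm, huv⟩
  rcases H with H | ⟨z, z1, z2, z3, O⟩
  · exact hvv (H v' a1.1 a1.2).symm
  rcases H' with H' | ⟨z', z1', z2', z3', O'⟩
  · exact hvv (H' v a2.1 a2.2)
  have e1 : z = v' := heavy h5 huw huv hvw.symm a1.1 a1.2 (Ne.symm hvv) z1 z2 z3.ne.symm
  have e2 : z' = v := heavy h5 huw' huv' hvw'.symm a2.1 a2.2 hvv z1' z2' z3'.ne.symm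
  subst e1 e2
  rcases hs with ⟨rfl, rfl⟩ | ⟨rfl, rfl⟩
  · exact OrdRule.anti hvv O O'
  · exact lt_asymm O.lt O'.lt

/-- In a `K4` with maximum `s`, an admissible edge at `s` goes to the minimum. -/
lemma good_max (h5 : NoC5 G) {p q r s : V} (hpq : G.Adj p q) (hpr : G.Adj p r) (hps : G.Adj p s)
    (hqr : G.Adj q r) (hqs : G.Adj q s) (hrs : G.Adj r s)
    (mp : p < s) (mr : r < s) (mq : q < s) {T : Finset V} (h : Good G T s(s, q)) :
    q < p ∧ q < r := by
  have cn : ∀ x, G.Adj s x → G.Adj q x → x = p ∨ x = r := by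
    intro x h1 h2
    by_cases hx : x = p
    · exact Or.inl hx
    · exact Or.inr (heavy h5 hqs.symm hps.symm hpq.symm h1 h2 hx hrs.symm hpr hqr.ne.symm).symm
  obtain ⟨u, v, w, hT, he, huv, hvw, huw, H⟩ := h
  have hs := Sym2.eq_iff.1 he
  rcases H with H | ⟨z, z1, z2, z3, O⟩
  · exfalso
    rcases hs with ⟨rfl, rfl⟩ | ⟨rfl, rfl⟩
    · exact hpr.ne ((H p hps.symm hpq.symm).trans (H r hrs.symm hqr).symm)
    · exact hpr.ne ((H p hpq.symm hps.symm).trans (H r hqr hrs.symm).symm)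
  rcases hs with ⟨rfl, rfl⟩ | ⟨rfl, rfl⟩
  · exact absurd O.lt mq.not_gt
  have c1 := cn v hvw.symm huv
  have c2 := cn z z3 z1
  have c3 := z2.ne
  have vs : v < s := by rcases c1 with rfl | rfl <;> assumption
  rcases O with O | O
  · exact absurd O.2.1 vs.not_gt
  · have := O.1
    have := O.1.trans O.2.1
    grind

lemma cyc_max (h5 : NoC5 G) {f : Finset V → Sym2 V}
    (hf : ∀ T, G.IsNClique 3 T → Good G T (f T))
    {p q r s : V} (hpq : G.Adj p q) (hpr : G.Adj p r) (hps : G.Adj p s)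
    (hqr : G.Adj q r) (hqs : G.Adj q s) (hrs : G.Adj r s)
    (mp : p < s) (mr : r < s) (mq : q < s)
    (h1 : ∃ T, G.IsNClique 3 T ∧ f T = s(s, p)) (h2 : ∃ T, G.IsNClique 3 T ∧ f T = s(r, s)) :
    False := by
  obtain ⟨T, hT, e⟩ := h1
  obtain ⟨T', hT', e'⟩ := h2
  have g := hf T hT
  have g' := hf T' hT'
  rw [e] at g
  rw [e', Sym2.eq_swap] at g'
  have a := good_max h5 hpq.symm hqr hqs hpr hps hrs mq mr mp g
  have b := good_max h5 hpr hpq hps hqr.symm hrs hqs mp mq mr g'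
  exact lt_asymm a.2 b.1

lemma cyc_chord (h5 : NoC5 G) {f : Finset V → Sym2 V}
    (hf : ∀ T, G.IsNClique 3 T → Good G T (f T)) {p q r s : V}
    (h1 : ∃ T, G.IsNClique 3 T ∧ f T = s(p, q)) (h2 : ∃ T, G.IsNClique 3 T ∧ f T = s(q, r))
    (h3 : ∃ T, G.IsNClique 3 T ∧ f T = s(r, s)) (h4 : ∃ T, G.IsNClique 3 T ∧ f T = s(s, p))
    (hqs : q ≠ s) (hpr : G.Adj p r) : False := by
  have adj : ∀ x y, (∃ T, G.IsNClique 3 T ∧ f T = s(x, y)) → G.Adj x y := by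
    rintro x y ⟨T, hT, e⟩
    exact (good_third (e ▸ hf T hT)).1
  have a1 := adj _ _ h1
  have a2 := adj _ _ h2
  have a3 := adj _ _ h3
  have a4 := adj _ _ h4
  by_cases aqs : G.Adj q s
  · have n1 := a1.ne
    have n2 := a2.ne
    have n3 := a3.ne
    have n4 := a4.ne
    have n5 := hpr.ne
    have : (p < s ∧ r < s ∧ q < s) ∨ (q < p ∧ s < p ∧ r < p) ∨ (r < q ∧ p < q ∧ s < q) ∨
        (s < r ∧ q < r ∧ p < r) := by grind
    rcases this with ⟨x, y, z⟩ | ⟨x, y, z⟩ | ⟨x, y, z⟩ | ⟨x, y, z⟩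
    · exact cyc_max h5 hf a1 hpr a4.symm a2 aqs a3 x y z h4 h3
    · exact cyc_max h5 hf a2 aqs a1.symm a3 hpr.symm a4 x y z h1 h4
    · exact cyc_max h5 hf a3 hpr.symm a2.symm a4 aqs.symm a1 x y z h2 h1
    · exact cyc_max h5 hf a4 aqs.symm a3.symm a1 hpr a2 x y z h3 h2
  · obtain ⟨T, hT, e⟩ := h1
    obtain ⟨T', hT', e'⟩ := h2
    obtain ⟨-, v, hv, v1, v2⟩ := good_third (e ▸ hf T hT)
    obtain ⟨-, v', hv', v1', v2'⟩ := good_third (e' ▸ hf T' hT')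
    have e1 : v = r := by
      by_contra hne
      refine h5 p v q r s v1 v2.symm a2 a3 a4 a1.ne hpr.ne hne ?_ hqs
      rintro rfl; exact aqs v2
    have e2 : v' = p := by
      by_contra hne
      refine h5 r v' q p s v2' v1'.symm a1.symm a4.symm a3.symm a2.ne.symm hpr.ne.symm hne ?_ hqs
      rintro rfl; exact aqs v1'
    subst e1 e2
    have : T = T' := by rw [hv, hv']; ext; simp; tauto
    subst this
    rw [e] at e'
    rcases Sym2.eq_iff.1 e' with h | h
    · exact a1.ne h.1
    · exact hpr.ne h.1

lemma exists_C4free (h5 : NoC5 G) [Finite V] [Nonempty V] :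
    ∃ H : SimpleGraph V, NoC4 H ∧ NoC5 H ∧
      {t : Finset V | G.IsNClique 3 t}.ncard ≤ H.edgeSet.ncard := by
  have : ∀ T : Finset V, ∃ e, G.IsNClique 3 T → Good G T e := by
    intro T
    by_cases hT : G.IsNClique 3 T
    · obtain ⟨e, he⟩ := good_exists h5 hT
      exact ⟨e, fun _ => he⟩
    · obtain ⟨x⟩ := ‹Nonempty V›
      exact ⟨s(x, x), fun h => absurd h hT⟩
  choose f hf using this
  have adj : ∀ x y, (∃ T, G.IsNClique 3 T ∧ f T = s(x, y)) → G.Adj x y := by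
    rintro x y ⟨T, hT, e⟩
    exact (good_third (e ▸ hf T hT)).1
  let H : SimpleGraph V :=
    { Adj := fun x y => ∃ T, G.IsNClique 3 T ∧ f T = s(x, y)
      symm := ⟨fun x y ⟨T, hT, e⟩ => ⟨T, hT, by rw [e, Sym2.eq_swap]⟩⟩
      loopless := ⟨fun x h => (adj x x h).ne rfl⟩ }
  refine ⟨H, ?_, ?_, ?_⟩
  · intro p q r s h1 h2 h3 h4 hpr hqs
    have h1' := h1
    obtain ⟨T, hT, e⟩ := h1'
    obtain ⟨-, v, hv, v1, v2⟩ := good_third (e ▸ hf T hT)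
    by_cases hvr : v = r
    · subst hvr
      exact cyc_chord h5 hf h1 h2 h3 h4 hqs v1
    by_cases hvs : v = s
    · subst hvs
      exact cyc_chord h5 hf h2 h3 h4 h1 hpr.symm v2
    exact h5 p v q r s v1 v2.symm (adj _ _ h2) (adj _ _ h3) (adj _ _ h4) (adj _ _ h1).ne hpr
      hvr hvs hqs
  · intro a b c d e h1 h2 h3 h4 h6
    exact h5 a b c d e (adj _ _ h1) (adj _ _ h2) (adj _ _ h3) (adj _ _ h4) (adj _ _ h6)
  · refine Set.ncard_le_ncard_of_injOn f ?_ ?_ (Set.toFinite _)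
    · intro T hT
      have hT' : G.IsNClique 3 T := hT
      have : ∀ e, f T = e → e ∈ H.edgeSet := by
        intro e
        induction e with
        | _ x y => intro h; exact ⟨T, hT', h⟩
      exact this _ rfl
    · intro T hT T' hT' e
      have g := hf T hT
      rw [e] at g
      exact good_inj h5 g (hf T' hT')
end

lemma sum_dg_eq {V : Type*} [Fintype V] (H : SimpleGraph V) :
    ∑ x, dg H x = 2 * (H.edgeSet.ncard : ℝ) := by
  classical
  have h := H.sum_degrees_eq_twice_card_edges
  have h2 : H.edgeSet.ncard = H.edgeFinset.card := by
    rw [← SimpleGraph.coe_edgeFinset, Set.ncard_coe_finset]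
  have h3 : ∀ x, dg H x = (H.degree x : ℝ) := by
    intro x
    rw [← SimpleGraph.card_neighborFinset_eq_degree, SimpleGraph.neighborFinset_eq_filter,
      Finset.card_filter]
    push_cast
    refine Finset.sum_congr rfl fun y _ => ?_
    unfold adjInd
    congr
  rw [h2]
  simp_rw [h3]
  exact_mod_cast h

theorem triangles_in_C5_free :
    ∀ ε : ℝ, 0 < ε → ∃ N : ℕ, ∀ n : ℕ, N ≤ n →
      ∀ G : SimpleGraph (Fin n), C5Free G →
        ({t : Finset (Fin n) | G.IsNClique 3 t}.ncard : ℝ) ≤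
          (1 / (2 * Real.sqrt 2) + ε) * (n : ℝ) ^ ((3 : ℝ) / 2) := by
  intro ε hε
  refine ⟨⌈(4 / ε) ^ 2⌉₊ + 1, fun n hn G hG => ?_⟩
  have : Nonempty (Fin n) := ⟨⟨0, by omega⟩⟩
  obtain ⟨H, h4, h5, hle⟩ := exists_C4free (noC5_of_C5Free hG)
  have hn1 : (1 : ℝ) ≤ n := by exact_mod_cast (by omega : 1 ≤ n)
  have hn2 : (4 / ε) ^ 2 ≤ (n : ℝ) :=
    (Nat.le_ceil _).trans (by exact_mod_cast (by omega : ⌈(4 / ε) ^ 2⌉₊ ≤ n))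
  have hs2 : Real.sqrt n ^ 2 = n := Real.sq_sqrt (by linarith)
  have hr : (n : ℝ) ^ ((3 : ℝ) / 2) = Real.sqrt n ^ 3 := by
    rw [Real.sqrt_eq_rpow, ← Real.rpow_natCast, ← Real.rpow_mul (by linarith)]
    norm_num
  rw [hr]
  have hi := edge_ineq H h4 h5 (n := (n : ℝ)) (by simp) (by linarith) (sum_dg_eq H)
  refine le_trans (by exact_mod_cast hle) (final_arith (t := (H.edgeSet.ncard : ℝ)) hε
    (Real.one_le_sqrt.2 hn1) (Real.le_sqrt_of_sq_le hn2) ?_)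
  rw [hs2]
  exact hi
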